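/- Let p be a prime, t ≥ 1 and n = p^t, and let H be a subgroup of Sp(4, ℤ/nℤ) containing −1. For each primitive vector v set ram_H(v) = |H ∩ Ram(v)|/n. If ε > 0 and the sum of ram_H(v) over all primitive vectors v of (ℤ/nℤ)⁴ is at least ε times the number of primitive vectors, then the index of H in Sp(4, ℤ/nℤ) is strictly less than 2⁵·ε⁻²·[2⁷²·ε⁻⁴²]_p. -/

import Mathlib

/-!
Write `R = ℤ/p^tℤ`, `n = p ^ t`, and call a primitive vector `v` *`q`-good* if `H` contains all
transvections `r_{v,qα}`.

*Many good vectors.* For fixed `v`, the `α` with `r_{v,α} ∈ H` form an ideal of the chain ring `R`.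
Choosing `p ^ k ≤ 2/ε < p ^ (k+1)`, a vector that is not `p ^ k`-good has
`ram_H(v) ≤ p ^ -(k+1) < ε/2`, so at least the proportion `ε/2` of the primitive vectors is
`p ^ k`-good (`density_good`).

*Good vectors make `H` large.* If `v` is `q`-good and `⟨x,v⟩` divides `e`, then some `r_{v,qα}`
carries `x` to `x + qe v`, so the orbit of `x` is at least about as large as the set of such `v`.
This is applied along the stabiliser chain of `e₁`, `e₃` and a good vector `u` in the plane
`⟨e₂,e₄⟩`, where only good vectors orthogonal to the earlier members are used (`core_bound`).
The comparison with `|Sp4| ≤ n ^ 10` bounds the index, once good vectors are dense in the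
whole space, in `e₁^⊥`, and in `⟨e₂,e₄⟩`
(`index_le_of_densities`). The last two densities hold for a suitable conjugate of `H`: average
over `Sp4`, which is transitive on primitive vectors (`exists_dense_translate`), and then over
the Heisenberg elements fixing `e₁` (`exists_heis`). The condition `⟨x,v⟩ ∣ e = p ^ a` loses only
the proportion `p ^ -(a+1)`. The outcome is `index_le`, and with the above density
the index is less than `2 ^ 41 ε ^ -22` (`index_lt_pow`).

*The bracket.* If `p ≤ x = 2 ^ 72 ε ^ -42`, then `[x]_p` exceeds `√x = 2 ^ 36 ε ^ -21` and the claim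
follows. If `p > x`, the index is less than `p`, so `H` contains all elements of `p`-power order, in
particular all transvections; every vector is then `1`-good and `index_le` gives index at most
`(8/3) ^ 3 < 2 ^ 5`.
-/

open Matrix

/-- `V n = (ℤ/nℤ)⁴`, with coordinates indexed so that `Sum.inl 0, Sum.inl 1, Sum.inr 0, Sum.inr 1`
correspond to the coordinates `x₁, x₂, x₃, x₄`. -/
abbrev V (n : ℕ) : Type := (Fin 2 ⊕ Fin 2) → ZMod n

/-- `Sp(4, ℤ/nℤ)`. -/
abbrev Sp4 (n : ℕ) := Matrix.symplecticGroup (Fin 2) (ZMod n)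

/-- The standard symplectic form `⟨x,y⟩ = x₁y₃ + x₂y₄ − x₃y₁ − x₄y₂`. -/
def sForm {n : ℕ} (x y : V n) : ZMod n :=
  x (Sum.inl 0) * y (Sum.inr 0) + x (Sum.inl 1) * y (Sum.inr 1)
    - x (Sum.inr 0) * y (Sum.inl 0) - x (Sum.inr 1) * y (Sum.inl 1)

/-- `g` belongs to `Ram(v)`, i.e. `g` is the symplectic transvection
`r_{v,α} : w ↦ w + α⟨w,v⟩v` for some `α : ℤ/nℤ`. -/
def InRam {n : ℕ} (v : V n) (g : ↥(Sp4 n)) : Prop :=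
  ∃ α : ZMod n, ∀ w : V n,
    (g : Matrix (Fin 2 ⊕ Fin 2) (Fin 2 ⊕ Fin 2) (ZMod n)).mulVec w = w + (α * sForm w v) • v

/-- `ram_H(v) = |H ∩ Ram(v)| / n`. -/
noncomputable def ramH {n : ℕ} (H : Subgroup ↥(Sp4 n)) (v : V n) : ℝ :=
  (Nat.card {g : ↥(Sp4 n) // g ∈ H ∧ InRam v g} : ℝ) / n

/-- `[x]_p`: the largest power `p^j ≤ x` (for `p` prime and `x ≥ 1`). -/
noncomputable def bracketP (p : ℕ) (x : ℝ) : ℝ := (p : ℝ) ^ (Nat.log p ⌊x⌋₊)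

section Helpers

/-! ### The action of `Sp4` and transvections -/

variable {n : ℕ}

lemma sp_smul_eq (g : ↥(Sp4 n)) (v : V n) :
    g • v = (g : Matrix (Fin 2 ⊕ Fin 2) (Fin 2 ⊕ Fin 2) (ZMod n)).mulVec v := rfl

lemma sp_smul_add (g : ↥(Sp4 n)) (v w : V n) : g • (v + w) = g • v + g • w :=
  Matrix.mulVec_add _ _ _

lemma sp_smul_smul (g : ↥(Sp4 n)) (c : ZMod n) (v : V n) : g • (c • v) = c • (g • v) :=
  Matrix.mulVec_smul _ _ _

lemma sp_ext {g h : ↥(Sp4 n)} (H : ∀ w : V n, g • w = h • w) : g = h := by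
  apply Subtype.ext
  apply Matrix.mulVec_injective
  funext w
  exact H w

lemma sForm_eq (x y : V n) : sForm x y = - (x ⬝ᵥ (Matrix.J (Fin 2) (ZMod n)).mulVec y) := by
  simp [sForm, Matrix.J, dotProduct, Matrix.mulVec, Fintype.sum_sum_type, Fin.sum_univ_two,
    Matrix.one_apply]
  ring

lemma sForm_smul_smul (g : ↥(Sp4 n)) (x y : V n) : sForm (g • x) (g • y) = sForm x y := by
  have h := SymplecticGroup.mem_iff'.1 g.2
  rw [sForm_eq, sForm_eq, sp_smul_eq, sp_smul_eq, Matrix.mulVec_mulVec,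
    ← Matrix.vecMul_transpose g.1 x, ← Matrix.dotProduct_mulVec, Matrix.mulVec_mulVec,
    ← Matrix.mul_assoc, h]

lemma sForm_add_left (x y z : V n) : sForm (x + y) z = sForm x z + sForm y z := by
  simp [sForm]; ring

lemma sForm_add_right (x y z : V n) : sForm x (y + z) = sForm x y + sForm x z := by
  simp [sForm]; ring

lemma sForm_smul_left (c : ZMod n) (x y : V n) : sForm (c • x) y = c * sForm x y := by
  simp [sForm]; ring

lemma sForm_smul_right (c : ZMod n) (x y : V n) : sForm x (c • y) = c * sForm x y := by
  simp [sForm]; ring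

lemma sForm_self (x : V n) : sForm x x = 0 := by
  simp [sForm]; ring

lemma sForm_swap (x y : V n) : sForm x y = - sForm y x := by
  simp [sForm]; ring

/-- The vector `φ` with `φ ⬝ᵥ w = sForm w v`. -/
def dualVec (v : V n) : V n :=
  Sum.elim (fun i => v (Sum.inr i)) (fun i => - v (Sum.inl i))

/-- The transvection `r_{v,α} : w ↦ w + α⟨w,v⟩v` as an element of `Sp4 n`. -/
def tv (v : V n) (α : ZMod n) : ↥(Sp4 n) :=
  ⟨1 + α • Matrix.vecMulVec v (dualVec v), by
    rw [SymplecticGroup.mem_iff]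
    ext i j
    rcases i with i | i <;> rcases j with j | j <;> fin_cases i <;> fin_cases j <;>
      simp [Matrix.mul_apply, Fintype.sum_sum_type, Fin.sum_univ_two, Matrix.J, dualVec,
        Matrix.vecMulVec_apply, Matrix.one_apply] <;> ring⟩

lemma tv_smul (v : V n) (α : ZMod n) (w : V n) : tv v α • w = w + (α * sForm w v) • v := by
  rw [sp_smul_eq]
  funext i
  rcases i with i | i <;> fin_cases i <;>
  simp [tv, Matrix.mulVec, dotProduct, Fintype.sum_sum_type, Fin.sum_univ_two, dualVec,
        Matrix.vecMulVec_apply, Matrix.one_apply, sForm] <;> ring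

lemma tv_mul (v : V n) (α β : ZMod n) : tv v α * tv v β = tv v (α + β) := by
  apply sp_ext
  intro w
  rw [mul_smul, tv_smul, tv_smul, tv_smul, sForm_add_left, sForm_smul_left, sForm_self]
  simp only [mul_zero, add_zero]
  rw [add_assoc, ← add_smul]
  ring_nf

lemma tv_zero (v : V n) : tv v 0 = 1 := by
  apply sp_ext
  intro w
  simp [tv_smul]

lemma tv_conj (g : ↥(Sp4 n)) (v : V n) (α : ZMod n) : g * tv v α * g⁻¹ = tv (g • v) α := by
  apply sp_ext
  intro w
  rw [mul_smul, mul_smul, tv_smul, tv_smul, sp_smul_add, smul_inv_smul, sp_smul_smul]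
  rw [← sForm_smul_smul g (g⁻¹ • w) v, smul_inv_smul]

lemma eq_tv_of_inRam {v : V n} {g : ↥(Sp4 n)} (h : InRam v g) : ∃ α, g = tv v α := by
  obtain ⟨α, hα⟩ := h
  exact ⟨α, sp_ext fun w => by rw [tv_smul, sp_smul_eq, hα]⟩

/-! ### Counting in `ZMod n` and in `V n` -/

/-- Divisibility in `ℤ/p^tℤ` is a total preorder, graded by powers of `p`. The clause `a < t`
records that everything divides `p ^ a = 0` once `t ≤ a`. -/
lemma dvd_pow_or (p t : ℕ) (hp : p.Prime) (a : ℕ) (x : ZMod (p ^ t)) :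
    x ∣ (p : ZMod (p ^ t)) ^ a ∨ (a < t ∧ (p : ZMod (p ^ t)) ^ (a + 1) ∣ x) := by
  have : NeZero (p ^ t) := ⟨pow_ne_zero _ hp.ne_zero⟩
  obtain ⟨i, hi, hgi⟩ := (Nat.dvd_prime_pow hp).1 (Nat.gcd_dvd_right x.val (p ^ t))
  have h1 : x ∣ (p : ZMod (p ^ t)) ^ i := by
    refine ⟨(Nat.gcdA x.val (p ^ t) : ZMod (p ^ t)), ?_⟩
    have := congrArg (Int.cast : ℤ → ZMod (p ^ t)) (Nat.gcd_eq_gcd_ab x.val (p ^ t))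
    rw [hgi] at this
    have h0 : (p : ZMod (p ^ t)) ^ t = 0 := by
      have := ZMod.natCast_self (p ^ t)
      push_cast at this
      exact this
    push_cast at this
    rw [h0] at this
    simpa using this
  have h2 : (p : ZMod (p ^ t)) ^ i ∣ x := by
    have := Nat.gcd_dvd_left x.val (p ^ t)
    rw [hgi] at this
    have := map_dvd (Nat.castRingHom (ZMod (p ^ t))) this
    simpa using this
  rcases le_or_gt i a with h | h
  · exact Or.inl (h1.trans (pow_dvd_pow _ h))
  · exact Or.inr ⟨by omega, (pow_dvd_pow _ h).trans h2⟩

lemma isUnit_or_dvd (p t : ℕ) (hp : p.Prime) (x : ZMod (p ^ t)) :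
    IsUnit x ∨ (p : ZMod (p ^ t)) ∣ x := by
  rcases dvd_pow_or p t hp 0 x with h | h
  · left
    rw [pow_zero] at h
    exact isUnit_of_dvd_one h
  · right
    simpa using h.2

lemma isUnit_one_add (p t : ℕ) (x : ZMod (p ^ t)) (hx : (p : ZMod (p ^ t)) ∣ x) :
    IsUnit (1 + x) := by
  apply IsNilpotent.isUnit_one_add
  obtain ⟨y, rfl⟩ := hx
  refine ⟨t, ?_⟩
  have := ZMod.natCast_self (p ^ t)
  push_cast at this
  rw [mul_pow, this, zero_mul]

open Classical in
lemma card_mul_eq_le [NeZero n] (c : ℕ) (hc : 0 < c) (d : ZMod n) :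
    (Finset.univ.filter fun z : ZMod n => (c : ZMod n) * z = d).card ≤ c := by
  rcases Finset.eq_empty_or_nonempty
    (Finset.univ.filter fun z : ZMod n => (c : ZMod n) * z = d) with h | ⟨z₀, h0⟩
  · simp [h]
  refine le_trans ?_ (IsAddCyclic.card_nsmul_eq_zero_le (α := ZMod n) hc)
  refine Finset.card_le_card_of_injOn (fun z => z - z₀) ?_ ?_
  · intro z hz
    simp only [Finset.coe_filter, Finset.mem_univ, true_and, Set.mem_ofPred_eq,
      Finset.mem_filter, nsmul_eq_mul] at *
    rw [mul_sub, hz, h0, sub_self]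
  · intro a _ b _ h
    simpa using h

open Classical in
/-- If some translation in `M` raises `f` by one, then `f` is equidistributed modulo `c` on `M`,
so at most one `c`-th of `M` has `c ∣ f v`. -/
lemma card_dvd_mul_le {c : ℕ} (hcn : c ∣ n) (M : Finset (V n)) (m : V n)
    (f : V n → ZMod n) (hM : ∀ v ∈ M, ∀ i : ℕ, v + (i : ZMod n) • m ∈ M)
    (hf : ∀ v, ∀ i : ℕ, f (v + (i : ZMod n) • m) = f v + i) :
    (M.filter fun v => (c : ZMod n) ∣ f v).card * c ≤ M.card := by
  rw [← Finset.card_range c, ← Finset.card_product, Finset.card_range]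
  refine Finset.card_le_card_of_injOn (fun x => x.1 + (x.2 : ZMod n) • m) ?_ ?_
  · rintro ⟨v, i⟩ h
    simp only [Finset.coe_product, Finset.coe_filter, Set.mem_prod, Set.mem_ofPred_eq] at h
    exact hM v h.1.1 i
  · rintro ⟨v, i⟩ h ⟨w, j⟩ h' heq
    simp only [Finset.coe_product, Finset.coe_filter, Set.mem_prod, Set.mem_ofPred_eq,
      Finset.coe_range, Set.mem_Iio] at h h' heq
    have h1 : f v + i = f w + j := by rw [← hf, ← hf, heq]
    have key : ∀ x : ZMod n, (c : ZMod n) ∣ x → ZMod.castHom hcn (ZMod c) x = 0 := by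
      rintro x ⟨y, rfl⟩
      rw [map_mul, map_natCast, ZMod.natCast_self, zero_mul]
    have h2 := congrArg (ZMod.castHom hcn (ZMod c)) h1
    rw [map_add, map_add, key _ h.1.2, key _ h'.1.2, map_natCast, map_natCast, zero_add, zero_add,
      ZMod.natCast_eq_natCast_iff'] at h2
    rw [Nat.mod_eq_of_lt h.2, Nat.mod_eq_of_lt h'.2] at h2
    subst h2
    simpa using heq

open Classical in
/-- The vectors agreeing with `y` outside the coordinate set `I`. -/
noncomputable def boxSet [NeZero n] (I : Finset (Fin 2 ⊕ Fin 2)) (y : V n) : Finset (V n) :=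
  Finset.univ.filter fun v => ∀ i ∉ I, v i = y i

lemma mem_boxSet [NeZero n] {I : Finset (Fin 2 ⊕ Fin 2)} {y v : V n} :
    v ∈ boxSet I y ↔ ∀ i ∉ I, v i = y i := by simp [boxSet]

open Classical in
lemma card_boxSet [NeZero n] (I : Finset (Fin 2 ⊕ Fin 2)) (y : V n) :
    (boxSet I y).card = n ^ I.card := by
  have : boxSet I y = Fintype.piFinset
      (fun i => if i ∈ I then (Finset.univ : Finset (ZMod n)) else {y i}) := by
    ext v
    simp only [mem_boxSet, Fintype.mem_piFinset]
    refine forall_congr' fun i => ?_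
    by_cases h : i ∈ I <;> simp [h]
  rw [this, Fintype.card_piFinset]
  simp only [apply_ite Finset.card, Finset.card_univ, ZMod.card, Finset.card_singleton]
  rw [Finset.prod_ite_mem, Finset.univ_inter, Finset.prod_const]

open Classical in
lemma card_smul_eq_le [NeZero n] (c : ℕ) (hc : 0 < c) (I : Finset (Fin 2 ⊕ Fin 2)) (d : V n) :
    ((boxSet I 0).filter fun v => (c : ZMod n) • v = d).card ≤ c ^ I.card := by
  have : ((boxSet I 0).filter fun v => (c : ZMod n) • v = d) ⊆ Fintype.piFinset
      (fun i => if i ∈ I then Finset.univ.filter (fun z : ZMod n => (c : ZMod n) * z = d i)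
        else {0}) := by
    intro v hv
    simp only [Finset.mem_filter, mem_boxSet, Fintype.mem_piFinset] at hv ⊢
    intro i
    by_cases h : i ∈ I
    · simp [h, ← hv.2]
    · simpa [h] using hv.1 i h
  refine (Finset.card_le_card this).trans ?_
  rw [Fintype.card_piFinset]
  simp only [apply_ite Finset.card, Finset.card_singleton]
  rw [Finset.prod_ite_mem, Finset.univ_inter]
  exact Finset.prod_le_pow_card _ _ _ fun i _ => card_mul_eq_le c hc _

/-! ### The stabiliser chain -/

/-- `v` is `q`-good for `H` if `H` contains all transvections `r_{v,qα}`. -/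
def Good (q : ℕ) (H : Subgroup ↥(Sp4 n)) (v : V n) : Prop :=
  ∀ α : ZMod n, tv v ((q : ZMod n) * α) ∈ H

lemma card_orbit_mul_card_stab (K : Subgroup ↥(Sp4 n)) (x : V n) :
    Nat.card (MulAction.orbit K x) * Nat.card ↥(K ⊓ MulAction.stabilizer ↥(Sp4 n) x)
      = Nat.card K := by
  rw [← Nat.card_congr (MulAction.orbitProdStabilizerEquivGroup K x), Nat.card_prod]
  congr 1
  refine Nat.card_congr ⟨fun g => ⟨⟨g.1, g.2.1⟩, g.2.2⟩, fun g => ⟨g.1.1, g.1.2, g.2⟩, ?_, ?_⟩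
  · intro g; rfl
  · intro g; rfl

open Classical in
/-- Good vectors produce large orbits: if `⟨x,v⟩` divides `e`, then some `r_{v,qα}` moves `x` to
`x + qe v`, and few `v` share the same image. -/
lemma card_le_orbit [NeZero n] (K : Subgroup ↥(Sp4 n)) (x : V n) (q e : ℕ) (hq : 0 < q)
    (he : 0 < e) (I : Finset (Fin 2 ⊕ Fin 2)) (T : Finset (V n)) (hT : T ⊆ boxSet I 0)
    (hK : ∀ v ∈ T, Good q K v) (hx : ∀ v ∈ T, sForm x v ∣ (e : ZMod n)) :
    T.card ≤ (q * e) ^ I.card * Nat.card (MulAction.orbit K x) := by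
  have hfin : (MulAction.orbit K x).Finite := Set.toFinite _
  rw [Nat.card_coe_set_eq, Set.ncard_eq_toFinset_card _ hfin]
  refine Finset.card_le_mul_card_image_of_maps_to
    (f := fun v => x + ((q * e : ℕ) : ZMod n) • v) ?_ _ ?_
  · intro v hv
    obtain ⟨α, hα⟩ := hx v hv
    rw [Set.Finite.mem_toFinset]
    refine ⟨⟨_, hK v hv α⟩, ?_⟩
    change tv v ((q : ZMod n) * α) • x = _
    rw [tv_smul, Nat.cast_mul, hα]
    ring_nf
  · intro b _
    refine le_trans (Finset.card_le_card ?_)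
      (card_smul_eq_le (q * e) (Nat.mul_pos hq he) I (b - x))
    intro v hv
    rw [Finset.mem_filter] at hv ⊢
    exact ⟨hT hv.1, by rw [← hv.2]; simp⟩

/-- The standard basis vector `e_i`. -/
def bv (n : ℕ) (i : Fin 2 ⊕ Fin 2) : V n := Pi.single i 1

lemma sForm_e1 (v : V n) : sForm (bv n (Sum.inl 0)) v = v (Sum.inr 0) := by
  simp [sForm, bv]

lemma sForm_e2 (v : V n) : sForm (bv n (Sum.inl 1)) v = v (Sum.inr 1) := by
  simp [sForm, bv]

lemma sForm_e3 (v : V n) : sForm (bv n (Sum.inr 0)) v = - v (Sum.inl 0) := by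
  simp [sForm, bv]

lemma tv_mem_stab {v x : V n} (h : sForm x v = 0) (α : ZMod n) :
    tv v α ∈ MulAction.stabilizer ↥(Sp4 n) x := by
  rw [MulAction.mem_stabilizer_iff, tv_smul, h]
  simp

lemma Good.inf_stab {q : ℕ} {K : Subgroup ↥(Sp4 n)} {v x : V n} (h : Good q K v)
    (hx : sForm x v = 0) : Good q (K ⊓ MulAction.stabilizer ↥(Sp4 n) x) v :=
  fun α => ⟨h α, tv_mem_stab hx _⟩

lemma tv_injective {u : V n} (hu : ∃ i, IsUnit (u i)) : Function.Injective (tv u) := by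
  intro α β h
  obtain ⟨i, hi⟩ := hu
  have key : ∀ w : V n, (α - β) * sForm w u * u i = 0 := by
    intro w
    have h1 : tv u α • w = tv u β • w := by rw [h]
    rw [tv_smul, tv_smul] at h1
    have h2 := congrFun h1 i
    simp only [Pi.add_apply, Pi.smul_apply, smul_eq_mul, add_right_inj] at h2
    linear_combination h2
  have key2 : ∀ w : V n, (α - β) * sForm w u = 0 := fun w =>
    (hi.mul_left_eq_zero).1 (key w)
  have hw : ∃ w : V n, IsUnit (sForm w u) := by
    rcases i with i | i <;> fin_cases i
    · exact ⟨bv n (Sum.inr 0), by simpa [sForm, bv] using hi⟩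
    · exact ⟨bv n (Sum.inr 1), by simpa [sForm, bv] using hi⟩
    · exact ⟨bv n (Sum.inl 0), by simpa [sForm, bv] using hi⟩
    · exact ⟨bv n (Sum.inl 1), by simpa [sForm, bv] using hi⟩
  obtain ⟨w, hw⟩ := hw
  exact sub_eq_zero.1 ((hw.mul_left_eq_zero).1 (key2 w))

open Classical in
lemma le_card_of_good [NeZero n] (K : Subgroup ↥(Sp4 n)) (u : V n) (hu : ∃ i, IsUnit (u i))
    (q : ℕ) (hq : 0 < q) (h : Good q K u) : n ≤ q * Nat.card K := by
  have hfin : (K : Set ↥(Sp4 n)).Finite := Set.toFinite _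
  have h1 : Nat.card K = hfin.toFinset.card := by
    rw [← Set.ncard_eq_toFinset_card _ hfin]; rfl
  rw [h1]
  have h2 := Finset.card_le_mul_card_image_of_maps_to (s := (Finset.univ : Finset (ZMod n)))
    (t := hfin.toFinset) (f := fun α => tv u ((q : ZMod n) * α)) (by
      intro α _
      rw [Set.Finite.mem_toFinset]
      exact h α) q (by
      intro b hb
      by_cases hex : ∃ α, tv u ((q : ZMod n) * α) = b
      · obtain ⟨α, rfl⟩ := hex
        refine le_trans (Finset.card_le_card ?_) (card_mul_eq_le q hq ((q : ZMod n) * α))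
        intro β hβ
        rw [Finset.mem_filter] at hβ ⊢
        exact ⟨Finset.mem_univ _, tv_injective hu hβ.2⟩
      · rw [Finset.card_eq_zero.2]
        · exact Nat.zero_le _
        · ext β
          simp only [Finset.mem_filter, Finset.mem_univ, true_and, Finset.notMem_empty, iff_false]
          exact fun hβ => hex ⟨β, hβ⟩)
  simpa [ZMod.card] using h2

open Classical in
/-- Lower bound for `|H|`, from the stabiliser chain of `e₁`, `e₃` and a good vector `u` of the
plane `⟨e₂, e₄⟩`; each factor counts good vectors orthogonal to the earlier members. -/
lemma core_bound [NeZero n] (H : Subgroup ↥(Sp4 n)) (q e : ℕ) (hq : 0 < q) (he : 0 < e)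
    (u : V n) (huH : Good q H u) (hu : ∃ i, IsUnit (u i)) (hu1 : u (Sum.inl 0) = 0)
    (hu3 : u (Sum.inr 0) = 0) :
    n * ((boxSet Finset.univ (0 : V n)).filter
          fun v => Good q H v ∧ v (Sum.inr 0) ∣ (e : ZMod n)).card
      * ((boxSet {Sum.inl 0, Sum.inl 1, Sum.inr 1} (0 : V n)).filter
          fun v => Good q H v ∧ v (Sum.inl 0) ∣ (e : ZMod n)).card
      * ((boxSet {Sum.inl 1, Sum.inr 1} (0 : V n)).filter
          fun v => Good q H v ∧ sForm u v ∣ (e : ZMod n)).card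
      ≤ Nat.card H * (q ^ 10 * e ^ 9) := by
  set K₁ := H ⊓ MulAction.stabilizer ↥(Sp4 n) (bv n (Sum.inl 0)) with hK₁
  set K₂ := K₁ ⊓ MulAction.stabilizer ↥(Sp4 n) (bv n (Sum.inr 0)) with hK₂
  set K₃ := K₂ ⊓ MulAction.stabilizer ↥(Sp4 n) u with hK₃
  have c1 := card_orbit_mul_card_stab H (bv n (Sum.inl 0))
  have c2 := card_orbit_mul_card_stab K₁ (bv n (Sum.inr 0))
  have c3 := card_orbit_mul_card_stab K₂ u
  rw [← hK₁] at c1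
  rw [← hK₂] at c2
  rw [← hK₃] at c3
  have o4 := le_card_of_good K₃ u hu q hq (((huH.inf_stab (x := bv n (Sum.inl 0))
    (by rw [sForm_e1, hu3])).inf_stab (x := bv n (Sum.inr 0)) (by rw [sForm_e3, hu1,
      neg_zero])).inf_stab (sForm_self u))
  have o1 := card_le_orbit H (bv n (Sum.inl 0)) q e hq he Finset.univ
    ((boxSet Finset.univ (0 : V n)).filter
          fun v => Good q H v ∧ v (Sum.inr 0) ∣ (e : ZMod n)) (Finset.filter_subset _ _)
    (fun v hv => (Finset.mem_filter.1 hv).2.1)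
    (fun v hv => by rw [sForm_e1]; exact (Finset.mem_filter.1 hv).2.2)
  have o2 := card_le_orbit K₁ (bv n (Sum.inr 0)) q e hq he {Sum.inl 0, Sum.inl 1, Sum.inr 1}
    ((boxSet {Sum.inl 0, Sum.inl 1, Sum.inr 1} (0 : V n)).filter
          fun v => Good q H v ∧ v (Sum.inl 0) ∣ (e : ZMod n)) (Finset.filter_subset _ _)
    (fun v hv => (Finset.mem_filter.1 hv).2.1.inf_stab (by
      rw [sForm_e1]
      exact mem_boxSet.1 (Finset.mem_filter.1 hv).1 _ (by simp)))
    (fun v hv => by rw [sForm_e3, neg_dvd]; exact (Finset.mem_filter.1 hv).2.2)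
  have o3 := card_le_orbit K₂ u q e hq he {Sum.inl 1, Sum.inr 1}
    ((boxSet {Sum.inl 1, Sum.inr 1} (0 : V n)).filter
          fun v => Good q H v ∧ sForm u v ∣ (e : ZMod n)) (Finset.filter_subset _ _)
    (fun v hv => ((Finset.mem_filter.1 hv).2.1.inf_stab (by
      rw [sForm_e1]
      exact mem_boxSet.1 (Finset.mem_filter.1 hv).1 _ (by simp))).inf_stab (by
      rw [sForm_e3, neg_eq_zero]
      exact mem_boxSet.1 (Finset.mem_filter.1 hv).1 _ (by simp)))
    (fun v hv => (Finset.mem_filter.1 hv).2.2)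
  have d4 : (Finset.univ : Finset (Fin 2 ⊕ Fin 2)).card = 4 := by decide
  have d3 : ({Sum.inl 0, Sum.inl 1, Sum.inr 1} : Finset (Fin 2 ⊕ Fin 2)).card = 3 := by decide
  have d2 : ({Sum.inl 1, Sum.inr 1} : Finset (Fin 2 ⊕ Fin 2)).card = 2 := by decide
  rw [d4] at o1
  rw [d3] at o2
  rw [d2] at o3
  refine (Nat.mul_le_mul (Nat.mul_le_mul (Nat.mul_le_mul o4 o1) o2) o3).trans (le_of_eq ?_)
  rw [← c1, ← c2, ← c3]
  ring

lemma card_orbit_le [NeZero n] (K : Subgroup ↥(Sp4 n)) (x : V n)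
    (I : Finset (Fin 2 ⊕ Fin 2)) (h : ∀ g ∈ K, ∀ i ∉ I, (g • x) i = x i) :
    Nat.card (MulAction.orbit K x) ≤ n ^ I.card := by
  classical
  have hfin : (MulAction.orbit K x).Finite := Set.toFinite _
  rw [Nat.card_coe_set_eq, Set.ncard_eq_toFinset_card _ hfin, ← card_boxSet I x]
  apply Finset.card_le_card
  intro y hy
  rw [Set.Finite.mem_toFinset] at hy
  obtain ⟨g, rfl⟩ := hy
  exact mem_boxSet.2 (h g.1 g.2)

lemma sForm_smul_of_stab {g : ↥(Sp4 n)} {z : V n} (h : g • z = z) (x : V n) :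
    sForm z (g • x) = sForm z x := by
  conv_lhs => rw [← h]
  exact sForm_smul_smul g z x

lemma card_Sp4_le [NeZero n] : Nat.card ↥(Sp4 n) ≤ n ^ 10 := by
  set K₁ := (⊤ : Subgroup ↥(Sp4 n)) ⊓ MulAction.stabilizer ↥(Sp4 n) (bv n (Sum.inl 0)) with hK₁
  set K₂ := K₁ ⊓ MulAction.stabilizer ↥(Sp4 n) (bv n (Sum.inr 0)) with hK₂
  set K₃ := K₂ ⊓ MulAction.stabilizer ↥(Sp4 n) (bv n (Sum.inl 1)) with hK₃
  set K₄ := K₃ ⊓ MulAction.stabilizer ↥(Sp4 n) (bv n (Sum.inr 1)) with hK₄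
  have c1 := card_orbit_mul_card_stab ⊤ (bv n (Sum.inl 0))
  have c2 := card_orbit_mul_card_stab K₁ (bv n (Sum.inr 0))
  have c3 := card_orbit_mul_card_stab K₂ (bv n (Sum.inl 1))
  have c4 := card_orbit_mul_card_stab K₃ (bv n (Sum.inr 1))
  rw [← hK₁] at c1
  rw [← hK₂] at c2
  rw [← hK₃] at c3
  rw [← hK₄] at c4
  have s1 : ∀ g ∈ K₁, ∀ x : V n, (g • x) (Sum.inr 0) = x (Sum.inr 0) := by
    intro g hg x
    rw [← sForm_e1 (g • x), ← sForm_e1 x]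
    exact sForm_smul_of_stab hg.2 x
  have s2 : ∀ g ∈ K₂, ∀ x : V n, (g • x) (Sum.inl 0) = x (Sum.inl 0) := by
    intro g hg x
    rw [← neg_inj, ← sForm_e3, ← sForm_e3]
    exact sForm_smul_of_stab hg.2 x
  have s3 : ∀ g ∈ K₃, ∀ x : V n, (g • x) (Sum.inr 1) = x (Sum.inr 1) := by
    intro g hg x
    rw [← sForm_e2 (g • x), ← sForm_e2 x]
    exact sForm_smul_of_stab hg.2 x
  have o1 := card_orbit_le ⊤ (bv n (Sum.inl 0)) Finset.univ (by simp)
  have o2 := card_orbit_le K₁ (bv n (Sum.inr 0)) {Sum.inl 0, Sum.inl 1, Sum.inr 1} (by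
    intro g hg i hi
    rcases i with i | i <;> fin_cases i <;> simp at hi
    exact s1 g hg _)
  have o3 := card_orbit_le K₂ (bv n (Sum.inl 1)) {Sum.inl 1, Sum.inr 1} (by
    intro g hg i hi
    rcases i with i | i <;> fin_cases i <;> simp at hi
    · exact s2 g hg _
    · exact s1 g hg.1 _)
  have o4 := card_orbit_le K₃ (bv n (Sum.inr 1)) {Sum.inl 1} (by
    intro g hg i hi
    rcases i with i | i <;> fin_cases i <;> simp at hi
    · exact s2 g hg.1 _
    · exact s1 g hg.1.1 _
    · exact s3 g hg _)
  have hK4 : K₄ = ⊥ := by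
    rw [eq_bot_iff]
    intro g hg
    rw [Subgroup.mem_bot]
    have hb : ∀ i, g • bv n i = bv n i := by
      intro i
      rcases i with i | i <;> fin_cases i
      · exact hg.1.1.1.2
      · exact hg.1.2
      · exact hg.1.1.2
      · exact hg.2
    apply Subtype.ext
    ext i j
    have := congrFun (hb j) i
    rw [sp_smul_eq, bv, Matrix.mulVec_single_one] at this
    simpa [Matrix.one_apply, Pi.single_apply] using this
  have d4 : (Finset.univ : Finset (Fin 2 ⊕ Fin 2)).card = 4 := by decide
  have d3 : ({Sum.inl 0, Sum.inl 1, Sum.inr 1} : Finset (Fin 2 ⊕ Fin 2)).card = 3 := by decide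
  have d2 : ({Sum.inl 1, Sum.inr 1} : Finset (Fin 2 ⊕ Fin 2)).card = 2 := by decide
  rw [d4] at o1
  rw [d3] at o2
  rw [d2] at o3
  rw [Finset.card_singleton] at o4
  have c5 : Nat.card K₄ = 1 := by rw [hK4]; simp
  rw [← Nat.card_congr Subgroup.topEquiv.toEquiv, ← c1, ← c2, ← c3, ← c4, c5, mul_one]
  refine (Nat.mul_le_mul o1 (Nat.mul_le_mul o2 (Nat.mul_le_mul o3 o4))).trans (le_of_eq ?_)
  ring

/-! ### Primitive vectors and transitivity -/

/-- A vector with a unit coordinate. Over `ℤ/p^tℤ` with `1 ≤ t` these are the primitive vectors. -/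
def Prim (v : V n) : Prop := ∃ i, IsUnit (v i)

lemma not_isUnit_p {p t : ℕ} (hp : p.Prime) (ht : 1 ≤ t) : ¬ IsUnit (p : ZMod (p ^ t)) :=
  ZMod.prime_natCast_not_isUnit_pow hp ht

lemma natCast_p_pow (p t : ℕ) : (p : ZMod (p ^ t)) ^ t = 0 := by
  have := ZMod.natCast_self (p ^ t)
  push_cast at this
  exact this

lemma addOrderOf_eq_iff_prim {p t : ℕ} (hp : p.Prime) (ht : 1 ≤ t) (v : V (p ^ t)) :
    addOrderOf v = p ^ t ↔ Prim v := by
  constructor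
  · intro h
    by_contra hno
    have hdiv : ∀ i, (p : ZMod (p ^ t)) ∣ v i := fun i =>
      (isUnit_or_dvd p t hp (v i)).resolve_left fun hu => hno ⟨i, hu⟩
    have h0 : (p ^ (t - 1)) • v = 0 := by
      funext i
      obtain ⟨y, hy⟩ := hdiv i
      rw [Pi.smul_apply, hy, nsmul_eq_mul]
      push_cast
      rw [← mul_assoc, ← pow_succ, Nat.sub_add_cancel ht, natCast_p_pow, zero_mul]
      rfl
    have h1 := addOrderOf_dvd_of_nsmul_eq_zero h0
    rw [h] at h1
    have h2 := (Nat.pow_dvd_pow_iff_le_right hp.one_lt).1 h1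
    omega
  · rintro ⟨i, hi⟩
    apply Nat.dvd_antisymm
    · apply addOrderOf_dvd_of_nsmul_eq_zero
      funext j
      rw [Pi.smul_apply, nsmul_eq_mul, ZMod.natCast_self, zero_mul]
      rfl
    · have h0 := congrFun (addOrderOf_nsmul_eq_zero v) i
      rw [Pi.smul_apply, nsmul_eq_mul] at h0
      have h1 := (hi.mul_left_eq_zero).1 h0
      exact (ZMod.natCast_eq_zero_iff _ _).1 h1

lemma exists_sForm_eq_one {v : V n} (h : Prim v) : ∃ w : V n, sForm v w = 1 := by
  have hw : ∃ w : V n, IsUnit (sForm v w) := by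
    obtain ⟨i, hi⟩ := h
    rcases i with i | i <;> fin_cases i
    · exact ⟨bv n (Sum.inr 0), by simpa [sForm, bv] using hi⟩
    · exact ⟨bv n (Sum.inr 1), by simpa [sForm, bv] using hi⟩
    · exact ⟨bv n (Sum.inl 0), by simpa [sForm, bv] using hi⟩
    · exact ⟨bv n (Sum.inl 1), by simpa [sForm, bv] using hi⟩
  obtain ⟨w, hw⟩ := hw
  refine ⟨(sForm v w)⁻¹ • w, ?_⟩
  rw [sForm_smul_right, ZMod.inv_mul_of_unit _ hw]

lemma prim_iff {p t : ℕ} (hp : p.Prime) (ht : 1 ≤ t) (v : V (p ^ t)) :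
    Prim v ↔ ∃ w : V (p ^ t), sForm v w = 1 := by
  refine ⟨exists_sForm_eq_one, ?_⟩
  rintro ⟨w, hw⟩
  by_contra hno
  have hdiv : ∀ i, (p : ZMod (p ^ t)) ∣ v i := fun i =>
    (isUnit_or_dvd p t hp (v i)).resolve_left fun hu => hno ⟨i, hu⟩
  apply not_isUnit_p hp ht
  apply isUnit_of_dvd_one
  rw [← hw, sForm]
  exact dvd_sub (dvd_sub (dvd_add ((hdiv _).mul_right _) ((hdiv _).mul_right _))
    ((hdiv _).mul_right _)) ((hdiv _).mul_right _)

lemma Prim.smul {p t : ℕ} (hp : p.Prime) (ht : 1 ≤ t) {v : V (p ^ t)} (h : Prim v)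
    (g : ↥(Sp4 (p ^ t))) : Prim (g • v) := by
  obtain ⟨w, hw⟩ := (prim_iff hp ht v).1 h
  exact (prim_iff hp ht _).2 ⟨g • w, by rw [sForm_smul_smul, hw]⟩

lemma exists_smul_of_isUnit {v w : V n} (h : IsUnit (sForm v w)) : ∃ g : ↥(Sp4 n), g • v = w := by
  have h1 : sForm v (w - v) = sForm v w := by
    have := sForm_add_right v (w - v) v
    rw [sub_add_cancel, sForm_self, add_zero] at this
    exact this.symm
  refine ⟨tv (w - v) (sForm v w)⁻¹, ?_⟩
  rw [tv_smul, h1, ZMod.inv_mul_of_unit _ h, one_smul, add_sub_cancel]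

/-- `Sp4` acts transitively on primitive vectors: two transvections suffice. -/
lemma exists_smul_eq {p t : ℕ} (hp : p.Prime) {v w : V (p ^ t)} (hv : Prim v)
    (hw : Prim w) : ∃ g : ↥(Sp4 (p ^ t)), g • v = w := by
  obtain ⟨z₁, h1⟩ := exists_sForm_eq_one hv
  obtain ⟨z₂, h2⟩ := exists_sForm_eq_one hw
  have hz : ∃ z, IsUnit (sForm v z) ∧ IsUnit (sForm w z) := by
    rcases isUnit_or_dvd p t hp (sForm w z₁) with h | h
    · exact ⟨z₁, by rw [h1]; exact isUnit_one, h⟩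
    rcases isUnit_or_dvd p t hp (sForm v z₂) with h' | h'
    · exact ⟨z₂, h', by rw [h2]; exact isUnit_one⟩
    refine ⟨z₁ + z₂, ?_, ?_⟩
    · rw [sForm_add_right, h1]
      exact isUnit_one_add p t _ h'
    · rw [sForm_add_right, h2, add_comm]
      exact isUnit_one_add p t _ h
  obtain ⟨z, hz1, hz2⟩ := hz
  obtain ⟨g, hg⟩ := exists_smul_of_isUnit hz1
  obtain ⟨g', hg'⟩ := exists_smul_of_isUnit (v := z) (w := w) (by
    rw [sForm_swap]; exact hz2.neg)
  exact ⟨g' * g, by rw [mul_smul, hg, hg']⟩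

open Classical in
/-- The finite set of primitive vectors. -/
noncomputable def primSet (n : ℕ) [NeZero n] : Finset (V n) := Finset.univ.filter Prim

lemma mem_primSet [NeZero n] {v : V n} : v ∈ primSet n ↔ Prim v := by simp [primSet]

open Classical in
/-- Some translate of a set `M` of primitive vectors meets `S` at least as densely as `S` sits in
the set of all primitive vectors: by transitivity this holds on average over `Sp4`. -/
lemma exists_dense_translate {p t : ℕ} (hp : p.Prime) (ht : 1 ≤ t) [NeZero (p ^ t)]
    (S M : Finset (V (p ^ t))) (hS : S ⊆ primSet (p ^ t)) (hM : M ⊆ primSet (p ^ t)) :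
    ∃ g : ↥(Sp4 (p ^ t)),
      S.card * M.card ≤ (primSet (p ^ t)).card * (M.filter fun v => g • v ∈ S).card := by
  let _ : Fintype ↥(Sp4 (p ^ t)) := Fintype.ofFinite _
  set X := primSet (p ^ t) with hX
  set N : V (p ^ t) → ℕ := fun v =>
    (Finset.univ.filter fun g : ↥(Sp4 (p ^ t)) => g • v ∈ S).card with hN
  have hconst : ∀ v ∈ X, ∀ w ∈ X, N v = N w := by
    intro v hv w hw
    obtain ⟨h, hh⟩ := exists_smul_eq hp (mem_primSet.1 hv) (mem_primSet.1 hw)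
    refine Finset.card_bij' (fun g _ => g * h⁻¹) (fun g _ => g * h) ?_ ?_ ?_ ?_
    · intro g hg
      simp only [Finset.mem_filter, Finset.mem_univ, true_and] at hg ⊢
      rwa [← hh, mul_smul, inv_smul_smul]
    · intro g hg
      simp only [Finset.mem_filter, Finset.mem_univ, true_and] at hg ⊢
      rwa [mul_smul, hh]
    · intro g _; simp
    · intro g _; simp
  have hswap : ∀ A : Finset (V (p ^ t)),
      ∑ v ∈ A, N v = ∑ g : ↥(Sp4 (p ^ t)), (A.filter fun v => g • v ∈ S).card := by
    intro A
    simp only [hN, Finset.card_filter]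
    exact Finset.sum_comm
  have hXsum : ∑ v ∈ X, N v = Fintype.card ↥(Sp4 (p ^ t)) * S.card := by
    rw [hswap, Finset.sum_const_nat (m := S.card)]
    · rw [Finset.card_univ]
    · intro g _
      refine Finset.card_bij' (fun v _ => g • v) (fun v _ => g⁻¹ • v) ?_ ?_ ?_ ?_
      · intro v hv
        exact (Finset.mem_filter.1 hv).2
      · intro v hv
        rw [Finset.mem_filter, smul_inv_smul]
        exact ⟨mem_primSet.2 ((mem_primSet.1 (hS hv)).smul hp ht _), hv⟩
      · intro v _; simp
      · intro v _; simp
  rcases M.eq_empty_or_nonempty with rfl | ⟨v₀, hv₀⟩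
  · exact ⟨1, by simp⟩
  have e1 : ∑ v ∈ X, N v = X.card * N v₀ :=
    Finset.sum_const_nat fun v hv => hconst v hv v₀ (hM hv₀)
  have e2 : ∑ v ∈ M, N v = M.card * N v₀ :=
    Finset.sum_const_nat fun v hv => hconst v (hM hv) v₀ (hM hv₀)
  rw [hXsum] at e1
  rw [hswap] at e2
  by_contra! hcon
  have hlt : ∑ g : ↥(Sp4 (p ^ t)), X.card * (M.filter fun v => g • v ∈ S).card
      < ∑ _g : ↥(Sp4 (p ^ t)), S.card * M.card :=
    Finset.sum_lt_sum_of_nonempty Finset.univ_nonempty fun g _ => hcon g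
  rw [← Finset.mul_sum, e2, Finset.sum_const, Finset.card_univ, smul_eq_mul,
    ← mul_assoc, ← mul_assoc, e1] at hlt
  apply lt_irrefl _ (lt_of_lt_of_eq hlt _)
  ring

/-! ### Heisenberg elements fixing `e₁` -/

/-- For `z` in the plane `⟨e₂, e₄⟩`, an element that fixes `e₁` and shears `w ∈ ⟨e₂, e₄⟩` to
`w + ⟨w,z⟩e₁`. -/
def heis (z : V n) : ↥(Sp4 n) := tv (bv n (Sum.inl 0) + z) 1 * tv z (-1)

lemma heis_smul_e1 {z : V n} (h : z (Sum.inr 0) = 0) :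
    heis z • bv n (Sum.inl 0) = bv n (Sum.inl 0) := by
  rw [heis, mul_smul, tv_smul, tv_smul]
  simp [sForm_e1, sForm_add_right, sForm_self, h]

lemma heis_smul {z w : V n} (hz : z (Sum.inr 0) = 0) (hw : w (Sum.inr 0) = 0) :
    heis z • w = w + sForm w z • bv n (Sum.inl 0) := by
  have h1 : sForm w (bv n (Sum.inl 0)) = 0 := by rw [sForm_swap, sForm_e1, hw, neg_zero]
  have h2 : sForm z (bv n (Sum.inl 0)) = 0 := by rw [sForm_swap, sForm_e1, hz, neg_zero]
  rw [heis, mul_smul, tv_smul, tv_smul, sForm_add_left, sForm_add_right, sForm_smul_left,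
    sForm_add_right, sForm_self, h1, h2]
  funext i
  simp
  ring

/-! ### Densities in coordinate boxes -/

open Classical in
/-- At least three quarters of the vectors of a box containing the second and fourth coordinate
directions have a unit among these two coordinates. -/
lemma three_mul_card_box_le {p t : ℕ} (hp : p.Prime) (ht : 1 ≤ t) [NeZero (p ^ t)]
    (I : Finset (Fin 2 ⊕ Fin 2)) (h2 : Sum.inl 1 ∈ I) (h4 : Sum.inr 1 ∈ I) :
    3 * (p ^ t) ^ I.card ≤ 4 * ((boxSet I (0 : V (p ^ t))).filter
      fun v => IsUnit (v (Sum.inl 1)) ∨ IsUnit (v (Sum.inr 1))).card := by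
  set B := boxSet I (0 : V (p ^ t)) with hB
  have hpn : p ∣ p ^ t := dvd_pow_self p (by omega)
  have hB' : ∀ j ∈ I, ∀ v ∈ B, ∀ i : ℕ, v + (i : ZMod (p ^ t)) • bv (p ^ t) j ∈ B := by
    intro j hj v hv i
    rw [hB, mem_boxSet] at hv ⊢
    intro k hk
    have : k ≠ j := fun h => hk (h ▸ hj)
    simp [bv, hv k hk, this]
  have e1 : (B.filter fun v => (p : ZMod (p ^ t)) ∣ v (Sum.inl 1)).card * p ≤ B.card := by
    convert card_dvd_mul_le hpn B (bv (p ^ t) (Sum.inl 1)) (fun v => v (Sum.inl 1))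
      (hB' _ h2) (by intro v i; simp [bv])
  have e2 : ((B.filter fun v => (p : ZMod (p ^ t)) ∣ v (Sum.inl 1)).filter
      fun v => (p : ZMod (p ^ t)) ∣ v (Sum.inr 1)).card * p ≤
      (B.filter fun v => (p : ZMod (p ^ t)) ∣ v (Sum.inl 1)).card := by
    convert card_dvd_mul_le hpn (B.filter fun v => (p : ZMod (p ^ t)) ∣ v (Sum.inl 1))
      (bv (p ^ t) (Sum.inr 1)) (fun v => v (Sum.inr 1))
      (by
        intro v hv i
        rw [Finset.mem_filter] at hv ⊢
        exact ⟨hB' _ h4 v hv.1 i, by simpa [bv] using hv.2⟩)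
      (by intro v i; simp [bv])
  have e3 : B.card ≤ (B.filter fun v => IsUnit (v (Sum.inl 1)) ∨ IsUnit (v (Sum.inr 1))).card +
      ((B.filter fun v => (p : ZMod (p ^ t)) ∣ v (Sum.inl 1)).filter
        fun v => (p : ZMod (p ^ t)) ∣ v (Sum.inr 1)).card := by
    refine le_trans (Finset.card_le_card ?_) (Finset.card_union_le _ _)
    intro v hv
    simp only [Finset.mem_union, Finset.mem_filter]
    rcases isUnit_or_dvd p t hp (v (Sum.inl 1)) with h | h
    · exact Or.inl ⟨hv, Or.inl h⟩
    rcases isUnit_or_dvd p t hp (v (Sum.inr 1)) with h' | h'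
    · exact Or.inl ⟨hv, Or.inr h'⟩
    exact Or.inr ⟨⟨hv, h⟩, h'⟩
  have hc : B.card = (p ^ t) ^ I.card := card_boxSet I 0
  rw [← hc]
  have f1 := (Nat.mul_le_mul_left _ hp.two_le).trans e1
  have f2 := (Nat.mul_le_mul_left _ hp.two_le).trans e2
  omega

open Classical in
/-- Imposing `f v ∣ p ^ a` costs at most the fraction `p ^ -(a+1)` of the ambient set, when `f`
is equidistributed. -/
lemma card_filter_le_add {p t : ℕ} (hp : p.Prime) (a : ℕ)
    (M : Finset (V (p ^ t))) (Q : V (p ^ t) → Prop) (m : V (p ^ t))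
    (f : V (p ^ t) → ZMod (p ^ t)) (hM : ∀ v ∈ M, ∀ i : ℕ, v + (i : ZMod (p ^ t)) • m ∈ M)
    (hf : ∀ v, ∀ i : ℕ, f (v + (i : ZMod (p ^ t)) • m) = f v + i) :
    (M.filter Q).card * p ^ (a + 1) ≤
      (M.filter fun v => Q v ∧ f v ∣ ((p ^ a : ℕ) : ZMod (p ^ t))).card * p ^ (a + 1)
        + M.card := by
  by_cases hat : a < t
  · have e := card_dvd_mul_le (c := p ^ (a + 1)) (Nat.pow_dvd_pow p hat) M m f hM hf
    have : (M.filter Q).card ≤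
        (M.filter fun v => Q v ∧ f v ∣ ((p ^ a : ℕ) : ZMod (p ^ t))).card +
        (M.filter fun v => ((p ^ (a + 1) : ℕ) : ZMod (p ^ t)) ∣ f v).card := by
      refine le_trans (Finset.card_le_card ?_) (Finset.card_union_le _ _)
      intro v hv
      rw [Finset.mem_filter] at hv
      simp only [Finset.mem_union, Finset.mem_filter, Nat.cast_pow]
      rcases dvd_pow_or p t hp a (f v) with h | h
      · exact Or.inl ⟨hv.1, hv.2, h⟩
      · exact Or.inr ⟨hv.1, h.2⟩
    refine (Nat.mul_le_mul_right _ this).trans ?_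
    rw [add_mul]
    exact Nat.add_le_add_left e _
  · have : (M.filter Q).card ≤
        (M.filter fun v => Q v ∧ f v ∣ ((p ^ a : ℕ) : ZMod (p ^ t))).card := by
      refine Finset.card_le_card ?_
      intro v hv
      rw [Finset.mem_filter] at hv ⊢
      refine ⟨hv.1, hv.2, ?_⟩
      rcases dvd_pow_or p t hp a (f v) with h | h
      · simpa using h
      · exact absurd h.1 hat
    exact (Nat.mul_le_mul_right _ this).trans (Nat.le_add_right _ _)

open Classical in
/-- Real form of `card_filter_le_add`: if the `Q`-density of `M` is at least `2θ` and
`θ p ^ (a+1) ≥ 1`, then imposing `f v ∣ p ^ a` leaves density at least `θ`. -/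
lemma le_card_filter_dvd {p t : ℕ} (hp : p.Prime) (a : ℕ)
    (M : Finset (V (p ^ t))) (Q : V (p ^ t) → Prop) (m : V (p ^ t))
    (f : V (p ^ t) → ZMod (p ^ t)) (hM : ∀ v ∈ M, ∀ i : ℕ, v + (i : ZMod (p ^ t)) • m ∈ M)
    (hf : ∀ v, ∀ i : ℕ, f (v + (i : ZMod (p ^ t)) • m) = f v + i)
    (θ : ℝ) (hθ : 1 ≤ θ * (p : ℝ) ^ (a + 1)) (hQ : 2 * θ * M.card ≤ (M.filter Q).card) :
    θ * M.card ≤ (M.filter fun v => Q v ∧ f v ∣ ((p ^ a : ℕ) : ZMod (p ^ t))).card := by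
  have e : ((M.filter Q).card : ℝ) * (p : ℝ) ^ (a + 1) ≤
      (M.filter fun v => Q v ∧ f v ∣ ((p ^ a : ℕ) : ZMod (p ^ t))).card * (p : ℝ) ^ (a + 1)
        + M.card := by
    exact_mod_cast card_filter_le_add hp a M Q m f hM hf
  have hpos : (0 : ℝ) < (p : ℝ) ^ (a + 1) := pow_pos (by exact_mod_cast hp.pos) _
  refine le_of_mul_le_mul_right ?_ hpos
  have h1 : 2 * θ * M.card * (p : ℝ) ^ (a + 1) ≤ (M.filter Q).card * (p : ℝ) ^ (a + 1) :=
    mul_le_mul_of_nonneg_right hQ hpos.le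
  have h2 : (M.card : ℝ) ≤ θ * (p : ℝ) ^ (a + 1) * M.card :=
    le_mul_of_one_le_left (Nat.cast_nonneg _) hθ
  nlinarith

/-- The second or the fourth coordinate is a unit. -/
def UnitW (v : V n) : Prop := IsUnit (v (Sum.inl 1)) ∨ IsUnit (v (Sum.inr 1))

lemma UnitW.prim {v : V n} (h : UnitW v) : Prim v := by
  rcases h with h | h
  · exact ⟨_, h⟩
  · exact ⟨_, h⟩

lemma exists_sForm_eq_one_of_unitW [NeZero n] {v : V n} (h : UnitW v) :
    ∃ m ∈ boxSet {Sum.inl 1, Sum.inr 1} (0 : V n), sForm v m = 1 := by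
  have key : ∀ j : Fin 2 ⊕ Fin 2, j = Sum.inl 1 ∨ j = Sum.inr 1 → IsUnit (sForm v (bv n j)) →
      ∃ m ∈ boxSet {Sum.inl 1, Sum.inr 1} (0 : V n), sForm v m = 1 := by
    intro j hj hu
    refine ⟨(sForm v (bv n j))⁻¹ • bv n j, ?_, ?_⟩
    · rw [mem_boxSet]
      intro k hk
      have : k ≠ j := by rintro rfl; simp [hj] at hk
      simp [bv, this]
    · rw [sForm_smul_right, ZMod.inv_mul_of_unit _ hu]
  rcases h with h | h
  · exact key (Sum.inr 1) (Or.inr rfl) (by simpa [sForm, bv] using h)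
  · exact key (Sum.inl 1) (Or.inl rfl) (by simpa [sForm, bv] using h)

open Classical in
/-- Passing from `e₁^⊥` to the plane `⟨e₂, e₄⟩`: the vector `w + c e₁` is the image of `w` under
exactly those `heis z` with `⟨w,z⟩ = c`, so on average over `z` the plane is hit with the density
of `P` in `e₁^⊥`. -/
lemma exists_heis [NeZero n] (P : V n → Prop) :
    ∃ z ∈ boxSet {Sum.inl 1, Sum.inr 1} (0 : V n),
      ((boxSet {Sum.inl 0, Sum.inl 1, Sum.inr 1} (0 : V n)).filter
        fun v => UnitW v ∧ P v).card ≤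
      n * ((boxSet {Sum.inl 1, Sum.inr 1} (0 : V n)).filter
        fun w => UnitW w ∧ P (heis z • w)).card := by
  set W := boxSet {Sum.inl 1, Sum.inr 1} (0 : V n) with hW
  set A := (boxSet {Sum.inl 0, Sum.inl 1, Sum.inr 1} (0 : V n)).filter
        fun v => UnitW v ∧ P v with hA
  have memW : ∀ {v : V n}, v ∈ W ↔ v (Sum.inl 0) = 0 ∧ v (Sum.inr 0) = 0 := by
    intro v
    rw [hW, mem_boxSet]
    constructor
    · intro h
      exact ⟨h _ (by simp), h _ (by simp)⟩
    · rintro ⟨h, h'⟩ i hi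
      rcases i with i | i <;> fin_cases i <;> simp at hi
      · exact h
      · exact h'
  set T := (W ×ˢ W).filter fun x => UnitW x.2 ∧ P (heis x.1 • x.2) with hT
  have hTsum : T.card = ∑ z ∈ W, (W.filter fun w => UnitW w ∧ P (heis z • w)).card := by
    rw [hT, Finset.card_filter, Finset.sum_product]
    simp only [Finset.card_filter]
  have hfib : n * A.card ≤ T.card := by
    refine Finset.mul_card_image_le_card_of_maps_to (f := fun x => heis x.1 • x.2) ?_ n ?_
    · rintro ⟨z, w⟩ h
      simp only [hT, Finset.mem_filter, Finset.mem_product] at h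
      obtain ⟨⟨hz, hw⟩, hu, hP⟩ := h
      rw [hA, Finset.mem_filter, mem_boxSet]
      have e := heis_smul (memW.1 hz).2 (memW.1 hw).2
      refine ⟨?_, ?_, hP⟩
      · intro i hi
        rcases i with i | i <;> fin_cases i <;> simp at hi
        simp only [e]
        simpa [bv] using (memW.1 hw).2
      · simp only [e]
        simpa [UnitW, bv] using hu
    · intro v hv
      rw [hA, Finset.mem_filter, mem_boxSet] at hv
      obtain ⟨hv0, hu, hP⟩ := hv
      have hv3 : v (Sum.inr 0) = 0 := hv0 _ (by simp)
      set w : V n := Function.update v (Sum.inl 0) 0 with hw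
      have hwW : w ∈ W := memW.2 ⟨by simp [hw], by simp [hw, hv3]⟩
      have hwu : UnitW w := by simpa [UnitW, hw] using hu
      obtain ⟨m, hm, hm1⟩ := exists_sForm_eq_one_of_unitW hwu
      have hz : ∀ s : ZMod n, v (Sum.inl 0) • m + s • w ∈ W := by
        intro s
        have := memW.1 hm
        have := memW.1 hwW
        rw [memW]
        simp [*]
      have himg : ∀ s : ZMod n, heis (v (Sum.inl 0) • m + s • w) • w = v := by
        intro s
        rw [heis_smul (memW.1 (hz s)).2 (memW.1 hwW).2, sForm_add_right, sForm_smul_right,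
          sForm_smul_right, sForm_self, hm1]
        funext i
        rcases i with i | i <;> fin_cases i <;> simp [hw, bv]
      have hcard : n = (Finset.univ : Finset (ZMod n)).card := by
        rw [Finset.card_univ, ZMod.card]
      conv_lhs => rw [hcard]
      refine Finset.card_le_card_of_injOn (fun s => (v (Sum.inl 0) • m + s • w, w)) ?_ ?_
      · intro s _
        simp only [Finset.coe_filter, Set.mem_ofPred_eq, hT, Finset.mem_filter,
          Finset.mem_product]
        exact ⟨⟨⟨hz s, hwW⟩, hwu, by rw [himg s]; exact hP⟩, himg s⟩
      · intro s _ s' _ h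
        have h1 : s • w = s' • w := by simpa using h
        obtain ⟨i, hi⟩ := hwu.prim
        exact hi.mul_right_cancel (congrFun h1 i)
  have hWcard : W.card = n ^ 2 := by rw [hW, card_boxSet]; rfl
  have hn : 0 < n := Nat.pos_of_ne_zero (NeZero.ne n)
  by_contra! hcon
  have hne : W.Nonempty := by
    rw [← Finset.card_pos, hWcard]
    positivity
  have hlt := Finset.sum_lt_sum_of_nonempty hne hcon
  rw [← Finset.mul_sum, ← hTsum, Finset.sum_const, hWcard, smul_eq_mul] at hlt
  have := Nat.mul_le_mul_left n hfib
  rw [← mul_assoc, ← sq] at this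
  exact absurd hlt (not_lt.2 this)

/-! ### From density of good vectors to the index -/

lemma boxSet_add_bv [NeZero n] {I : Finset (Fin 2 ⊕ Fin 2)} {j : Fin 2 ⊕ Fin 2} (hj : j ∈ I)
    {v : V n} (hv : v ∈ boxSet I 0) (i : ℕ) : v + (i : ZMod n) • bv n j ∈ boxSet I 0 := by
  rw [mem_boxSet] at hv ⊢
  intro k hk
  have : k ≠ j := fun h => hk (h ▸ hj)
  simp [bv, hv k hk, this]

open Classical in
/-- If good vectors have density at least `2θ` in the whole space, in `e₁^⊥` (the vectors with
vanishing third coordinate) and in the plane `⟨e₂, e₄⟩`, then `core_bound` together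
with `|Sp4| ≤ n ^ 10` bounds the index. -/
lemma index_le_of_densities {p t : ℕ} (hp : p.Prime) [NeZero (p ^ t)]
    (H : Subgroup ↥(Sp4 (p ^ t))) (q a : ℕ) (hq : 0 < q) (θ : ℝ) (hθ0 : 0 < θ)
    (hθ : 1 ≤ θ * (p : ℝ) ^ (a + 1))
    (h4 : 2 * θ * ((p ^ t : ℕ) : ℝ) ^ 4 ≤
      ((boxSet Finset.univ (0 : V (p ^ t))).filter fun v => Good q H v).card)
    (h3 : 2 * θ * ((p ^ t : ℕ) : ℝ) ^ 3 ≤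
      ((boxSet {Sum.inl 0, Sum.inl 1, Sum.inr 1} (0 : V (p ^ t))).filter
        fun v => Good q H v).card)
    (h2 : 2 * θ * ((p ^ t : ℕ) : ℝ) ^ 2 ≤
      ((boxSet {Sum.inl 1, Sum.inr 1} (0 : V (p ^ t))).filter
        fun v => UnitW v ∧ Good q H v).card) :
    (H.index : ℝ) * θ ^ 3 ≤ (q : ℝ) ^ 10 * ((p : ℝ) ^ a) ^ 9 := by
  obtain ⟨N, hN⟩ : ∃ N : ℝ, N = ((p ^ t : ℕ) : ℝ) := ⟨_, rfl⟩
  rw [← hN] at h4 h3 h2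
  have hnpos : (0 : ℝ) < N := by
    rw [hN]
    exact_mod_cast Nat.pos_of_ne_zero (NeZero.ne (p ^ t))
  have k4 : ((boxSet Finset.univ (0 : V (p ^ t))).card : ℝ) = N ^ 4 := by
    rw [card_boxSet, hN]; norm_cast
  have k3 : ((boxSet {Sum.inl 0, Sum.inl 1, Sum.inr 1} (0 : V (p ^ t))).card : ℝ) = N ^ 3 := by
    rw [card_boxSet, hN]; norm_cast
  have k2 : ((boxSet {Sum.inl 1, Sum.inr 1} (0 : V (p ^ t))).card : ℝ) = N ^ 2 := by
    rw [card_boxSet, hN]; norm_cast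
  -- A good vector of the plane with a unit coordinate exists because its density is positive.
  obtain ⟨u, hu⟩ : ((boxSet {Sum.inl 1, Sum.inr 1} (0 : V (p ^ t))).filter
        fun v => UnitW v ∧ Good q H v).Nonempty := by
    rw [← Finset.card_pos]
    have : (0 : ℝ) < 2 * θ * N ^ 2 := by positivity
    exact_mod_cast this.trans_le h2
  rw [Finset.mem_filter] at hu
  obtain ⟨huW, huU, huH⟩ := hu
  obtain ⟨m, hmW, hm⟩ := exists_sForm_eq_one_of_unitW huU
  have h2' : 2 * θ * N ^ 2 ≤
      ((boxSet {Sum.inl 1, Sum.inr 1} (0 : V (p ^ t))).filter fun v => Good q H v).card := by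
    refine h2.trans (Nat.cast_le.2 (Finset.card_le_card ?_))
    intro v hv
    rw [Finset.mem_filter] at hv ⊢
    exact ⟨hv.1, hv.2.2⟩
  rw [← k4] at h4
  rw [← k3] at h3
  rw [← k2] at h2'
  have d4 := le_card_filter_dvd hp a (boxSet Finset.univ 0)
    (fun v => Good q H v) (bv (p ^ t) (Sum.inr 0)) (fun v => v (Sum.inr 0)) (fun v hv i => boxSet_add_bv (Finset.mem_univ _) hv i)
    (by intro v i; simp [bv]) θ hθ (by convert h4)
  have d3 := le_card_filter_dvd hp a (boxSet {Sum.inl 0, Sum.inl 1, Sum.inr 1} 0)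
    (fun v => Good q H v) (bv (p ^ t) (Sum.inl 0)) (fun v => v (Sum.inl 0))
    (fun v hv i => boxSet_add_bv (by simp) hv i) (by intro v i; simp [bv]) θ hθ (by convert h3)
  have d2 := le_card_filter_dvd hp a (boxSet {Sum.inl 1, Sum.inr 1} 0)
    (fun v => Good q H v) m (fun v => sForm u v) (fun v hv i => by
      rw [mem_boxSet] at hv hmW ⊢
      intro k hk
      simp [hv k hk, hmW k hk])
    (by intro v i; rw [sForm_add_right, sForm_smul_right, hm, mul_one]) θ hθ (by convert h2')
  rw [k4] at d4
  rw [k3] at d3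
  rw [k2] at d2
  have hpa : 0 < p ^ a := pow_pos hp.pos a
  have hc := core_bound H q (p ^ a) hq hpa u huH huU.prim
    (mem_boxSet.1 huW _ (by simp)) (mem_boxSet.1 huW _ (by simp))
  have hc' : N * (θ * N ^ 4) * (θ * N ^ 3) * (θ * N ^ 2) ≤
      (Nat.card H : ℝ) * ((q : ℝ) ^ 10 * ((p : ℝ) ^ a) ^ 9) := by
    have hc2 : ((_ : ℕ) : ℝ) ≤ ((_ : ℕ) : ℝ) := Nat.cast_le.2 hc
    rw [Nat.cast_mul, Nat.cast_mul, Nat.cast_mul, ← hN] at hc2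
    refine (le_trans ?_ hc2).trans (le_of_eq (by push_cast; ring))
    gcongr
    · exact d4.trans_eq (by congr!)
    · exact d3.trans_eq (by congr!)
    · exact d2.trans_eq (by congr!)
  have hidx : (H.index : ℝ) * Nat.card H ≤ N ^ 10 := by
    have := card_Sp4_le (n := p ^ t)
    rw [← H.index_mul_card] at this
    rw [hN]
    exact_mod_cast this
  have hHpos : (0 : ℝ) < Nat.card H := by exact_mod_cast Nat.card_pos
  have hn10 : (0 : ℝ) < N ^ 10 := by positivity
  refine le_of_mul_le_mul_right ?_ hn10
  calc (H.index : ℝ) * θ ^ 3 * N ^ 10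
      = H.index * (N * (θ * N ^ 4) * (θ * N ^ 3) * (θ * N ^ 2)) := by ring
    _ ≤ H.index * ((Nat.card H : ℝ) * ((q : ℝ) ^ 10 * ((p : ℝ) ^ a) ^ 9)) := by gcongr
    _ = (H.index * Nat.card H) * ((q : ℝ) ^ 10 * ((p : ℝ) ^ a) ^ 9) := by ring
    _ ≤ N ^ 10 * ((q : ℝ) ^ 10 * ((p : ℝ) ^ a) ^ 9) := by gcongr
    _ = (q : ℝ) ^ 10 * ((p : ℝ) ^ a) ^ 9 * N ^ 10 := by ring

lemma good_comap_iff {q : ℕ} {H : Subgroup ↥(Sp4 n)} (g : ↥(Sp4 n)) (v : V n) :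
    Good q (H.comap (MulAut.conj g).toMonoidHom) v ↔ Good q H (g • v) := by
  refine forall_congr' fun α => ?_
  rw [Subgroup.mem_comap, ← tv_conj]
  rfl

open Classical in
/-- If `q`-good vectors have density at least `σ` among primitive vectors, then, after replacing
`H` by a conjugate, `index_le_of_densities` applies with `θ = 3σ/8`. -/
lemma index_le {p t : ℕ} (hp : p.Prime) (ht : 1 ≤ t) [NeZero (p ^ t)]
    (H : Subgroup ↥(Sp4 (p ^ t))) (q a : ℕ) (hq : 0 < q) (σ : ℝ) (hσ : 0 < σ)
    (hS : σ * (primSet (p ^ t)).card ≤ ((primSet (p ^ t)).filter fun v => Good q H v).card)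
    (hθ : 1 ≤ 3 / 8 * σ * (p : ℝ) ^ (a + 1)) :
    (H.index : ℝ) * (3 / 8 * σ) ^ 3 ≤ (q : ℝ) ^ 10 * ((p : ℝ) ^ a) ^ 9 := by
  obtain ⟨N, hN⟩ : ∃ N : ℝ, N = ((p ^ t : ℕ) : ℝ) := ⟨_, rfl⟩
  have hNpos : 0 < N := by
    rw [hN]
    exact_mod_cast Nat.pos_of_ne_zero (NeZero.ne (p ^ t))
  set X := primSet (p ^ t) with hX
  set S := X.filter fun v => Good q H v with hSdef
  set B := boxSet {Sum.inl 0, Sum.inl 1, Sum.inr 1} (0 : V (p ^ t)) with hB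
  set W := boxSet {Sum.inl 1, Sum.inr 1} (0 : V (p ^ t)) with hW
  set M := B.filter UnitW with hM
  have hXcard : 3 / 4 * N ^ 4 ≤ X.card := by
    have h1 := three_mul_card_box_le hp ht Finset.univ (Finset.mem_univ _) (Finset.mem_univ _)
    have h2 : ((boxSet Finset.univ (0 : V (p ^ t))).filter
        fun v => IsUnit (v (Sum.inl 1)) ∨ IsUnit (v (Sum.inr 1))).card ≤ X.card := by
      refine Finset.card_le_card fun v hv => mem_primSet.2 ?_
      exact UnitW.prim (Finset.mem_filter.1 hv).2
    have h3 := h1.trans (Nat.mul_le_mul_left 4 h2)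
    have h4 : (3 : ℝ) * N ^ 4 ≤ 4 * X.card := by
      rw [hN]
      exact_mod_cast h3
    linarith
  have hMcard : 3 / 4 * N ^ 3 ≤ M.card := by
    have h1 := three_mul_card_box_le hp ht {Sum.inl 0, Sum.inl 1, Sum.inr 1} (by simp) (by simp)
    have h2 : ((boxSet {Sum.inl 0, Sum.inl 1, Sum.inr 1} (0 : V (p ^ t))).filter
        fun v => IsUnit (v (Sum.inl 1)) ∨ IsUnit (v (Sum.inr 1))).card ≤ M.card := by
      refine Finset.card_le_card fun v hv => ?_
      rw [Finset.mem_filter] at hv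
      exact Finset.mem_filter.2 ⟨hv.1, hv.2⟩
    have h3 := h1.trans (Nat.mul_le_mul_left 4 h2)
    have h4 : (3 : ℝ) * N ^ 3 ≤ 4 * M.card := by
      rw [hN]
      exact_mod_cast h3
    linarith
  have hXpos : (0 : ℝ) < X.card := lt_of_lt_of_le (by positivity) hXcard
  obtain ⟨g, hg⟩ := exists_dense_translate hp ht S M (Finset.filter_subset _ _)
    (fun v hv => mem_primSet.2 (Finset.mem_filter.1 hv).2.prim)
  have hN3 : σ * (3 / 4 * N ^ 3) ≤ (B.filter fun v => UnitW v ∧ Good q H (g • v)).card := by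
    have h1 : (M.filter fun v => g • v ∈ S).card ≤
        (B.filter fun v => UnitW v ∧ Good q H (g • v)).card := by
      refine Finset.card_le_card fun v hv => ?_
      simp only [hM, hSdef, Finset.mem_filter] at hv ⊢
      exact ⟨hv.1.1, hv.1.2, hv.2.2⟩
    have h2 : (S.card : ℝ) * M.card ≤
        X.card * (B.filter fun v => UnitW v ∧ Good q H (g • v)).card := by
      exact_mod_cast hg.trans (Nat.mul_le_mul_left _ h1)
    refine le_of_mul_le_mul_left ?_ hXpos
    calc (X.card : ℝ) * (σ * (3 / 4 * N ^ 3)) = σ * X.card * (3 / 4 * N ^ 3) := by ring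
      _ ≤ (S.card : ℝ) * M.card := by gcongr
      _ ≤ _ := h2
  obtain ⟨z, hzW, hz⟩ := exists_heis (fun v => Good q H (g • v))
  have hz0 : z (Sum.inr 0) = 0 := mem_boxSet.1 hzW _ (by simp)
  set H₀ := H.comap (MulAut.conj (g * heis z)).toMonoidHom with hH₀
  have hgood : ∀ v, Good q H₀ v ↔ Good q H (g • heis z • v) := by
    intro v
    rw [hH₀, good_comap_iff, mul_smul]
  have hindex : H₀.index = H.index :=
    Subgroup.index_comap_of_surjective H (MulAut.conj (g * heis z)).surjective
  rw [← hindex]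
  refine index_le_of_densities hp H₀ q a hq _ (by positivity) hθ ?_ ?_ ?_
  · rw [← hN]
    have h1 : S.card ≤ ((boxSet Finset.univ (0 : V (p ^ t))).filter
        fun v => Good q H₀ v).card := by
      refine Finset.card_le_card_of_injOn (fun v => (heis z)⁻¹ • g⁻¹ • v) ?_ ?_
      · intro v hv
        simp only [hSdef, Finset.coe_filter, Set.mem_ofPred_eq] at hv
        simp only [Finset.coe_filter, Set.mem_ofPred_eq, hgood, smul_inv_smul]
        exact ⟨mem_boxSet.2 (by simp), hv.2⟩
      · intro v _ w _ h
        simpa using h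
    calc 2 * (3 / 8 * σ) * N ^ 4 = σ * (3 / 4 * N ^ 4) := by ring
      _ ≤ σ * X.card := by gcongr
      _ ≤ S.card := hS
      _ ≤ _ := by exact_mod_cast h1
  · rw [← hN]
    have h1 : (B.filter fun v => UnitW v ∧ Good q H (g • v)).card ≤
        (B.filter fun v => Good q H₀ v).card := by
      refine Finset.card_le_card_of_injOn (fun v => (heis z)⁻¹ • v) ?_ ?_
      · intro v hv
        simp only [Finset.coe_filter, Set.mem_ofPred_eq] at hv
        simp only [Finset.coe_filter, Set.mem_ofPred_eq, hgood, smul_inv_smul]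
        refine ⟨mem_boxSet.2 ?_, hv.2.2⟩
        intro i hi
        rcases i with i | i <;> fin_cases i <;> simp at hi
        -- `heis z` fixes `e₁`, hence preserves the third coordinate `⟨e₁, ·⟩`.
        have hfix : (heis z)⁻¹ • bv (p ^ t) (Sum.inl 0) = bv (p ^ t) (Sum.inl 0) := by
          rw [inv_smul_eq_iff, heis_smul_e1 hz0]
        have := sForm_smul_of_stab hfix v
        rw [sForm_e1, sForm_e1] at this
        refine this.trans (mem_boxSet.1 hv.1 _ (by simp))
      · intro v _ w _ h
        simpa using h
    calc 2 * (3 / 8 * σ) * N ^ 3 = σ * (3 / 4 * N ^ 3) := by ring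
      _ ≤ _ := hN3
      _ ≤ _ := by exact_mod_cast h1
  · rw [← hN]
    have h1 : (B.filter fun v => UnitW v ∧ Good q H (g • v)).card ≤
        p ^ t * (W.filter fun w => UnitW w ∧ Good q H₀ w).card := by
      simpa only [hgood] using hz
    have h2 : ((B.filter fun v => UnitW v ∧ Good q H (g • v)).card : ℝ) ≤
        N * (W.filter fun w => UnitW w ∧ Good q H₀ w).card := by
      rw [hN]
      exact_mod_cast h1
    refine le_of_mul_le_mul_left ?_ hNpos
    calc N * (2 * (3 / 8 * σ) * N ^ 2) = σ * (3 / 4 * N ^ 3) := by ring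
      _ ≤ _ := hN3
      _ ≤ _ := h2

/-! ### Most primitive vectors are good -/

lemma tv_pow (v : V n) (α : ZMod n) (k : ℕ) : tv v α ^ k = tv v (k * α) := by
  induction k with
  | zero => simp [tv_zero]
  | succ k ih => rw [pow_succ, ih, tv_mul]; push_cast; ring_nf

lemma tv_mul_mem [NeZero n] {H : Subgroup ↥(Sp4 n)} {v : V n} {β : ZMod n} (h : tv v β ∈ H)
    (c : ZMod n) : tv v (β * c) ∈ H := by
  have := H.pow_mem h c.val
  rw [tv_pow, ZMod.natCast_zmod_val, mul_comm] at this
  exact this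

open Classical in
lemma card_ram_le [NeZero n] (H : Subgroup ↥(Sp4 n)) (v : V n) :
    Nat.card {g : ↥(Sp4 n) // g ∈ H ∧ InRam v g} ≤
      (Finset.univ.filter fun α : ZMod n => tv v α ∈ H).card := by
  have hc : ∀ g : {g : ↥(Sp4 n) // g ∈ H ∧ InRam v g}, ∃ α, g.1 = tv v α :=
    fun g => eq_tv_of_inRam g.2.2
  choose f hf using hc
  rw [← Fintype.card_subtype, ← Nat.card_eq_fintype_card]
  refine Nat.card_le_card_of_injective (fun g => ⟨f g, by rw [← hf g]; exact g.2.1⟩) ?_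
  intro g g' h
  have h' : f g = f g' := congrArg Subtype.val h
  exact Subtype.ext (by rw [hf g, hf g', h'])

lemma ramH_le_one [NeZero n] (H : Subgroup ↥(Sp4 n)) (v : V n) : ramH H v ≤ 1 := by
  classical
  have h1 := (card_ram_le H v).trans (Finset.card_le_univ _)
  rw [ZMod.card] at h1
  have hn : (0 : ℝ) < n := by exact_mod_cast Nat.pos_of_ne_zero (NeZero.ne n)
  rw [ramH, div_le_one hn]
  exact_mod_cast h1

open Classical in
lemma card_dvd_zmod_le {c : ℕ} [NeZero n] (hcn : c ∣ n) :
    (Finset.univ.filter fun α : ZMod n => (c : ZMod n) ∣ α).card * c ≤ n := by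
  have h := card_dvd_mul_le hcn (boxSet {Sum.inl 0} (0 : V n)) (bv n (Sum.inl 0))
    (fun v => v (Sum.inl 0)) (fun v hv i => boxSet_add_bv (by simp) hv i)
    (by intro v i; simp [bv])
  rw [card_boxSet, Finset.card_singleton, pow_one] at h
  refine le_trans (Nat.mul_le_mul_right c ?_) h
  refine Finset.card_le_card_of_injOn (fun α => α • bv n (Sum.inl 0)) ?_ ?_
  · intro α hα
    simp only [Finset.coe_filter, Set.mem_ofPred_eq, Finset.mem_univ, true_and] at hα
    simp only [Finset.coe_filter, Set.mem_ofPred_eq, mem_boxSet]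
    refine ⟨?_, by simpa [bv] using hα⟩
    intro i hi
    have : i ≠ Sum.inl 0 := by simpa using hi
    simp [bv, this]
  · intro α _ β _ h
    simpa [bv] using congrFun h (Sum.inl 0)

/-- The `α` with `r_{v,α} ∈ H` form an ideal of the chain ring `ℤ/p^tℤ`; if it does not contain
`p ^ k`, it lies in the ideal of `p ^ (k+1)`. -/
lemma ramH_le_of_not_good {p t : ℕ} (hp : p.Prime) [NeZero (p ^ t)]
    (H : Subgroup ↥(Sp4 (p ^ t))) (v : V (p ^ t)) (k : ℕ) (h : ¬ Good (p ^ k) H v) :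
    ramH H v * (p : ℝ) ^ (k + 1) ≤ 1 := by
  classical
  have hall : ∀ β : ZMod (p ^ t), tv v β ∈ H →
      k < t ∧ (p : ZMod (p ^ t)) ^ (k + 1) ∣ β := by
    intro β hβ
    refine (dvd_pow_or p t hp k β).resolve_left ?_
    rintro ⟨γ, hγ⟩
    apply h
    intro α
    rw [Nat.cast_pow, hγ, mul_assoc]
    exact tv_mul_mem hβ _
  have hkt : k < t := (hall 0 (by rw [tv_zero]; exact H.one_mem)).1
  have h1 := card_dvd_zmod_le (n := p ^ t) (Nat.pow_dvd_pow p (Nat.succ_le_of_lt hkt))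
  have h2 : Nat.card {g : ↥(Sp4 (p ^ t)) // g ∈ H ∧ InRam v g} * p ^ (k + 1) ≤ p ^ t := by
    refine le_trans (Nat.mul_le_mul_right _ ((card_ram_le H v).trans ?_)) h1
    refine Finset.card_le_card fun β hβ => ?_
    rw [Finset.mem_filter] at hβ ⊢
    refine ⟨hβ.1, ?_⟩
    simpa using (hall β hβ.2).2
  have hn : (0 : ℝ) < ((p ^ t : ℕ) : ℝ) := by
    exact_mod_cast Nat.pos_of_ne_zero (NeZero.ne (p ^ t))
  rw [ramH, div_mul_eq_mul_div, div_le_one hn]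
  exact_mod_cast h2

open Classical in
/-- Vectors that are not `p ^ k`-good contribute at most `ε/2` each to the sum of `ram_H`, so the
good ones must make up the proportion `ε/2`. -/
lemma density_good {p t : ℕ} (hp : p.Prime) [NeZero (p ^ t)]
    (H : Subgroup ↥(Sp4 (p ^ t))) (ε : ℝ)
    (hsum : ε * (primSet (p ^ t)).card ≤ ∑ v ∈ primSet (p ^ t), ramH H v)
    (k : ℕ) (hk : 1 ≤ ε / 2 * (p : ℝ) ^ (k + 1)) :
    ε / 2 * (primSet (p ^ t)).card ≤
      ((primSet (p ^ t)).filter fun v => Good (p ^ k) H v).card := by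
  have hpos : (0 : ℝ) < (p : ℝ) ^ (k + 1) := pow_pos (by exact_mod_cast hp.pos) _
  have hε : 0 < ε := by
    by_contra! h
    nlinarith
  have h1 : ∑ v ∈ primSet (p ^ t), ramH H v ≤
      ∑ v ∈ primSet (p ^ t), ((if Good (p ^ k) H v then (1 : ℝ) else 0) + ε / 2) := by
    refine Finset.sum_le_sum fun v _ => ?_
    split_ifs with hg
    · linarith [ramH_le_one H v]
    · have := (ramH_le_of_not_good hp H v k hg).trans hk
      rw [zero_add]
      exact le_of_mul_le_mul_right this hpos
  rw [Finset.sum_add_distrib, Finset.sum_boole, Finset.sum_const, nsmul_eq_mul] at h1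
  linarith

/-! ### Large primes -/

/-- A subgroup of index less than `p` contains every element of `p`-power order. -/
lemma mem_of_index_lt {G : Type*} [Group G] [Finite G] {p t : ℕ} (hp : p.Prime) (H : Subgroup G)
    (hH : H.index < p) (g : G) (hg : g ^ (p ^ t) = 1) : g ∈ H := by
  have h1 : H.relIndex (Subgroup.zpowers g) ∣ p ^ t := by
    refine (H.relIndex_dvd_card (Subgroup.zpowers g)).trans ?_
    rw [Nat.card_zpowers]
    exact orderOf_dvd_of_pow_eq_one hg
  have h2 : H.relIndex (Subgroup.zpowers g) ≤ H.index := by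
    rw [← H.relIndex_top_right]
    exact Subgroup.relIndex_le_of_le_right le_top
      (by rw [H.relIndex_top_right]; exact Subgroup.index_ne_zero_of_finite)
  obtain ⟨i, -, hi⟩ := (Nat.dvd_prime_pow hp).1 h1
  have hi0 : i = 0 := by
    by_contra h0
    have : p ≤ p ^ i := Nat.le_self_pow h0 p
    omega
  rw [hi0, pow_zero] at hi
  exact Subgroup.relIndex_eq_one.1 hi (Subgroup.mem_zpowers g)

lemma good_of_index_lt {p t : ℕ} (hp : p.Prime) [NeZero (p ^ t)] (H : Subgroup ↥(Sp4 (p ^ t)))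
    (hH : H.index < p) (q : ℕ) (v : V (p ^ t)) : Good q H v := by
  intro α
  refine mem_of_index_lt (t := t) hp H hH _ ?_
  rw [tv_pow, ZMod.natCast_self, zero_mul, tv_zero]

lemma primSet_card_pos {p t : ℕ} [NeZero (p ^ t)] :
    (0 : ℝ) < (primSet (p ^ t)).card := by
  have : (primSet (p ^ t)).Nonempty := ⟨bv (p ^ t) (Sum.inl 0), mem_primSet.2
    ⟨Sum.inl 0, by simp [bv]⟩⟩
  exact_mod_cast this.card_pos

/-! ### Assembling the bound -/

/-- The index bound without any bracket: `2 ^ 10 (16/3) ^ 12 < 2 ^ 41`. -/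
lemma index_lt_pow {p t : ℕ} (hp : p.Prime) (ht : 1 ≤ t) [NeZero (p ^ t)]
    (H : Subgroup ↥(Sp4 (p ^ t))) (ε : ℝ) (hε : 0 < ε) (hε1 : ε ≤ 1)
    (hsum : ε * (primSet (p ^ t)).card ≤ ∑ v ∈ primSet (p ^ t), ramH H v) :
    (H.index : ℝ) < 2 ^ 41 * ε⁻¹ ^ 22 := by
  set y := ε⁻¹ with hy
  have hy1 : 1 ≤ y := (one_le_inv₀ hε).2 hε1
  have hεy : ε * y = 1 := mul_inv_cancel₀ hε.ne'
  have hp1 : (1 : ℝ) < p := by exact_mod_cast hp.one_lt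
  obtain ⟨k, hk1, hk2⟩ := exists_nat_pow_near (x := 2 * y) (by linarith) hp1
  obtain ⟨a, ha1, ha2⟩ := exists_nat_pow_near (x := 16 / 3 * y) (by linarith) hp1
  have hS := density_good hp H ε hsum k (by nlinarith)
  have hI := index_le hp ht H (p ^ k) a (pow_pos hp.pos k) (ε / 2) (by linarith) hS
    (by nlinarith)
  have hpa : (0 : ℝ) ≤ (p : ℝ) ^ a := by positivity
  have hpk : (0 : ℝ) ≤ (p : ℝ) ^ k := by positivity
  have h1 : (H.index : ℝ) * (3 / 8 * (ε / 2)) ^ 3 ≤ (2 * y) ^ 10 * (16 / 3 * y) ^ 9 := by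
    refine hI.trans ?_
    push_cast
    gcongr
  have h2 : (H.index : ℝ) ≤ (2 * y) ^ 10 * (16 / 3 * y) ^ 12 := by
    calc (H.index : ℝ) = H.index * (3 / 8 * (ε / 2)) ^ 3 * (16 / 3 * y) ^ 3 := by
          rw [mul_assoc, ← mul_pow,
            show 3 / 8 * (ε / 2) * (16 / 3 * y) = ε * y by ring, hεy, one_pow, mul_one]
      _ ≤ (2 * y) ^ 10 * (16 / 3 * y) ^ 9 * (16 / 3 * y) ^ 3 := by gcongr
      _ = _ := by ring
  calc (H.index : ℝ) ≤ (2 * y) ^ 10 * (16 / 3 * y) ^ 12 := h2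
    _ = 2 ^ 10 * (16 / 3) ^ 12 * y ^ 22 := by ring
    _ < 2 ^ 41 * y ^ 22 := by
      have : 0 < y ^ 22 := by positivity
      gcongr
      norm_num

lemma main_bound {p t : ℕ} (hp : p.Prime) (ht : 1 ≤ t) [NeZero (p ^ t)]
    (H : Subgroup ↥(Sp4 (p ^ t))) (ε : ℝ) (hε : 0 < ε)
    (hsum : ε * (primSet (p ^ t)).card ≤ ∑ v ∈ primSet (p ^ t), ramH H v) :
    (H.index : ℝ) < 2 ^ 5 * ε⁻¹ ^ 2 * bracketP p (2 ^ 72 * ε⁻¹ ^ 42) := by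
  have hXpos : (0 : ℝ) < (primSet (p ^ t)).card := primSet_card_pos
  have hε1 : ε ≤ 1 := by
    have h1 : ∑ v ∈ primSet (p ^ t), ramH H v ≤ ∑ v ∈ primSet (p ^ t), (1 : ℝ) :=
      Finset.sum_le_sum fun v _ => ramH_le_one H v
    rw [Finset.sum_const, nsmul_eq_mul, mul_one] at h1
    have h2 := hsum.trans h1
    exact le_of_mul_le_mul_right (by linarith) hXpos
  have hI := index_lt_pow hp ht H ε hε hε1 hsum
  set y := ε⁻¹ with hy
  have hy1 : 1 ≤ y := (one_le_inv₀ hε).2 hε1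
  have hy22 : y ^ 22 ≤ y ^ 23 := pow_le_pow_right₀ hy1 (by norm_num)
  have hx0 : (0 : ℝ) ≤ 2 ^ 72 * y ^ 42 := by positivity
  rcases le_or_gt (p : ℝ) (2 ^ 72 * y ^ 42) with hpx | hpx
  · -- The bracket `b` satisfies `b ^ 2 ≥ b * p > 2 ^ 72 * y ^ 42`.
    have hpf : p ≤ ⌊2 ^ 72 * y ^ 42⌋₊ := Nat.le_floor hpx
    rw [bracketP]
    set j := Nat.log p ⌊2 ^ 72 * y ^ 42⌋₊ with hj
    have hj1 : 1 ≤ j := Nat.log_pos hp.one_lt hpf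
    have hlt : 2 ^ 72 * y ^ 42 < (p : ℝ) ^ (j + 1) := by
      have := Nat.lt_pow_succ_log_self hp.one_lt ⌊2 ^ 72 * y ^ 42⌋₊
      rw [Nat.floor_lt hx0, Nat.cast_pow] at this
      exact this
    have hp1 : (1 : ℝ) ≤ p := by exact_mod_cast hp.one_lt.le
    have hb : (2 ^ 36 * y ^ 21) ^ 2 < ((p : ℝ) ^ j) ^ 2 := by
      calc (2 ^ 36 * y ^ 21) ^ 2 = 2 ^ 72 * y ^ 42 := by ring
        _ < (p : ℝ) ^ (j + 1) := hlt
        _ ≤ (p : ℝ) ^ (j * 2) := pow_le_pow_right₀ hp1 (by omega)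
        _ = _ := pow_mul _ _ _
    have hb' : 2 ^ 36 * y ^ 21 < (p : ℝ) ^ j := lt_of_pow_lt_pow_left₀ 2 (by positivity) hb
    calc (H.index : ℝ) < 2 ^ 41 * y ^ 22 := hI
      _ ≤ 2 ^ 41 * y ^ 23 := by gcongr
      _ = 2 ^ 5 * y ^ 2 * (2 ^ 36 * y ^ 21) := by ring
      _ ≤ 2 ^ 5 * y ^ 2 * (p : ℝ) ^ j := by gcongr
  · -- The bracket is `1`, and the index is so small that `H` contains all transvections.
    have hfl : ⌊2 ^ 72 * y ^ 42⌋₊ < p := (Nat.floor_lt hx0).2 hpx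
    rw [bracketP, Nat.log_of_lt hfl, pow_zero, mul_one]
    have hlt : H.index < p := by
      have h1 : (2 : ℝ) ^ 41 * y ^ 22 ≤ 2 ^ 72 * y ^ 42 := by
        gcongr
        · norm_num
        · norm_num
        · norm_num
      exact_mod_cast hI.trans_le (h1.trans hpx.le)
    have hp3 : (3 : ℝ) ≤ p := by
      have h1 : (1 : ℝ) ≤ y ^ 42 := one_le_pow₀ hy1
      have h2 : (2 : ℝ) ^ 72 * 1 ≤ 2 ^ 72 * y ^ 42 := by gcongr
      norm_num at h2
      linarith
    classical
    have hS : (1 : ℝ) * (primSet (p ^ t)).card ≤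
        ((primSet (p ^ t)).filter fun v => Good 1 H v).card := by
      rw [Finset.filter_true_of_mem fun v _ => good_of_index_lt hp H hlt 1 v, one_mul]
    have hI2 := index_le hp ht H 1 0 one_pos 1 one_pos (by convert hS) (by
      rw [zero_add, pow_one]; linarith)
    have hy2 : 1 ≤ y ^ 2 := one_le_pow₀ hy1
    norm_num at hI2
    linarith

end Helpers

theorem statement0 (p t : ℕ) (hp : p.Prime) (ht : 1 ≤ t) (n : ℕ) (hn : n = p ^ t)
    (H : Subgroup ↥(Sp4 n))
    (hneg : ∃ h ∈ H, (h : Matrix (Fin 2 ⊕ Fin 2) (Fin 2 ⊕ Fin 2) (ZMod n)) = -1)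
    (ε : ℝ) (hε : 0 < ε)
    (hsum : ε * (Nat.card {v : V n // addOrderOf v = n}) ≤
      ∑ᶠ v ∈ {v : V n | addOrderOf v = n}, ramH H v) :
    (H.index : ℝ) < 2 ^ 5 * ε⁻¹ ^ 2 * bracketP p (2 ^ 72 * ε⁻¹ ^ 42) := by
  subst hn
  have : NeZero (p ^ t) := ⟨pow_ne_zero _ hp.ne_zero⟩
  have hset : {v : V (p ^ t) | addOrderOf v = p ^ t} = ↑(primSet (p ^ t)) := by
    ext v
    rw [Set.mem_ofPred_eq, addOrderOf_eq_iff_prim hp ht, Finset.mem_coe, mem_primSet]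
  have hcard : Nat.card {v : V (p ^ t) // addOrderOf v = p ^ t} = (primSet (p ^ t)).card := by
    change Nat.card ↥{v : V (p ^ t) | addOrderOf v = p ^ t} = _
    rw [hset, Nat.card_coe_set_eq, Set.ncard_coe_finset]
  refine main_bound hp ht H ε hε ?_
  rwa [hcard, hset, finsum_mem_coe_finset] at hsum
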